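/- For every symmetric complex matrix C (C = Cᵀ) of size n × n, there exists a unitary matrix U ∈ U(n) such that Uᵀ C U is a diagonal matrix with real nonnegative entries. -/

import Mathlib

/-!
The map `T x = conj (C x)` on `ℂⁿ` is only real-linear, but symmetry of `C` says exactly that the
complex number `⟪T x, y⟫ = (C x)ᵀ y` is symmetric in `x` and `y`. In particular `T` is a
self-adjoint operator for the real inner product `Re ⟪·, ·⟫`, so it has a real eigenvector in every
nonzero invariant real subspace; and `T` is antilinear, so multiplying an eigenvector by `i` flips
the sign of its eigenvalue, which can therefore be taken nonnegative. The complex orthogonal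
complement of a family of such eigenvectors is again `T`-invariant, whence an orthonormal basis `v`
of `ℂⁿ` with `T vⱼ = dⱼ vⱼ` and `dⱼ ≥ 0` (`exists_orthonormal_eigenvectors`). For the unitary `U`
with columns `vⱼ`, the entries of `Uᵀ C U` are `(C vₖ)ᵀ vⱼ = ⟪T vₖ, vⱼ⟫ = dₖ ⟪vₖ, vⱼ⟫`.
-/

open Matrix

section Antilinear

variable {E : Type*} [NormedAddCommGroup E] [InnerProductSpace ℂ E]

/-- The symmetry of `⟪T x, y⟫` forces `T` to be antilinear, since the form is linear in `y`. -/
lemma map_I_smul_of_symm (T : E →ₗ[ℝ] E)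
    (hT : ∀ x y, inner ℂ (T x) y = inner ℂ (T y) x) (x : E) :
    T (Complex.I • x) = -(Complex.I • T x) := by
  refine ext_inner_right ℂ fun y => ?_
  rw [hT, inner_smul_right, hT y x, inner_neg_left, inner_smul_left]
  simp

/-- The eigenvector comes from the spectral theorem for the real self-adjoint restriction of `T` to
`W`; that `W` is a complex subspace is needed to replace `x` by `i x` when the eigenvalue is
negative. -/
lemma exists_unit_eigenvector [FiniteDimensional ℂ E] (T : E →ₗ[ℝ] E)
    (hT : ∀ x y, inner ℂ (T x) y = inner ℂ (T y) x)
    (W : Submodule ℂ E) (hW : W ≠ ⊥) (hTW : ∀ x ∈ W, T x ∈ W) :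
    ∃ w ∈ W, ‖w‖ = 1 ∧ ∃ d : ℝ, 0 ≤ d ∧ T w = d • w := by
  -- The real inner product `Re ⟪x, y⟫`; Mathlib does not make this a global instance.
  let : InnerProductSpace ℝ E := InnerProductSpace.complexToReal
  have hsymm : T.IsSymmetric := fun x y => by
    change (inner ℂ (T x) y).re = (inner ℂ x (T y)).re
    rw [hT]
    exact inner_re_symm (𝕜 := ℂ) _ _
  have : FiniteDimensional ℝ E := FiniteDimensional.complexToReal E
  have hres := hsymm.restrict_invariant (V := W.restrictScalars ℝ) hTW
  obtain ⟨x, hxW, hx0, μ, hμ⟩ : ∃ x ∈ W, x ≠ 0 ∧ ∃ μ : ℝ, T x = μ • x := by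
    by_contra! hno
    have hsub : Subsingleton (W.restrictScalars ℝ) := by
      refine hres.subsingleton_of_no_eigenvalue_finiteDimensional fun μ => ?_
      rw [Submodule.eq_bot_iff]
      intro x hx
      by_contra hx0
      refine hno x x.2 (fun h => hx0 (Subtype.ext h)) μ ?_
      exact congrArg Subtype.val (Module.End.mem_eigenspace_iff.1 hx)
    refine hW ((Submodule.eq_bot_iff W).2 fun x hx => ?_)
    exact congrArg Subtype.val (hsub.elim ⟨x, hx⟩ 0)
  obtain ⟨y, hyW, hy0, d, hd, hTy⟩ : ∃ y ∈ W, y ≠ 0 ∧ ∃ d : ℝ, 0 ≤ d ∧ T y = d • y := by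
    rcases le_total 0 μ with h | h
    · exact ⟨x, hxW, hx0, μ, h, hμ⟩
    · refine ⟨Complex.I • x, W.smul_mem _ hxW, smul_ne_zero Complex.I_ne_zero hx0, -μ,
        neg_nonneg.2 h, ?_⟩
      rw [map_I_smul_of_symm T hT, hμ, neg_smul, smul_comm]
  refine ⟨‖y‖⁻¹ • y, (W.restrictScalars ℝ).smul_mem _ hyW, ?_, d, hd, ?_⟩
  · rw [norm_smul, norm_inv, norm_norm, inv_mul_cancel₀ (norm_ne_zero_iff.2 hy0)]
  · rw [map_smul, hTy, smul_comm]

/-- Orthonormality is over `ℂ`, and the family grows one vector at a time inside the complex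
orthogonal complement of the previous ones. -/
lemma exists_orthonormal_eigenvectors [FiniteDimensional ℂ E] (T : E →ₗ[ℝ] E)
    (hT : ∀ x y, inner ℂ (T x) y = inner ℂ (T y) x) (k : ℕ) (hk : k ≤ Module.finrank ℂ E) :
    ∃ v : Fin k → E, Orthonormal ℂ v ∧ ∃ d : Fin k → ℝ, ∀ i, 0 ≤ d i ∧ T (v i) = d i • v i := by
  induction k with
  | zero => exact ⟨Fin.elim0, ⟨fun i => i.elim0, fun i => i.elim0⟩, Fin.elim0, fun i => i.elim0⟩
  | succ k ih =>
    obtain ⟨v, hv, d, hd⟩ := ih (by omega)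
    have hmem : ∀ x, x ∈ (Submodule.span ℂ (Set.range v))ᗮ ↔ ∀ i, inner ℂ (v i) x = 0 := by
      intro x
      rw [← Submodule.span_singleton_le_iff_mem, ← Submodule.isOrtho_iff_le,
        Submodule.isOrtho_comm, Submodule.isOrtho_span]
      simp
    obtain ⟨w, hw, hw1, e, he, hTw⟩ := exists_unit_eigenvector T hT
      (Submodule.span ℂ (Set.range v))ᗮ (by
        intro h
        rw [Submodule.orthogonal_eq_bot_iff] at h
        have := finrank_span_eq_card hv.linearIndependent
        rw [h, finrank_top, Fintype.card_fin] at this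
        omega) (by
        intro x hx
        rw [hmem] at hx ⊢
        intro i
        -- `⟪T x, vᵢ⟫ = ⟪T vᵢ, x⟫ = dᵢ ⟪vᵢ, x⟫ = 0`, so the complement is invariant under `T`.
        rw [inner_eq_zero_symm, hT, (hd i).2, ← Complex.coe_smul, inner_smul_left, hx i, mul_zero])
    rw [hmem] at hw
    refine ⟨Fin.cons w v, ⟨?_, ?_⟩, Fin.cons e d, ?_⟩
    · exact Fin.cases hw1 hv.1
    · intro i j hij
      cases i using Fin.cases with
      | zero =>
        cases j using Fin.cases with
        | zero => exact absurd rfl hij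
        | succ j => simpa using inner_eq_zero_symm.1 (hw j)
      | succ i =>
        cases j using Fin.cases with
        | zero => simpa using hw i
        | succ j => simpa using hv.2 (fun h => hij (congrArg Fin.succ h))
    · exact Fin.cases ⟨he, hTw⟩ hd

end Antilinear

/-- The antilinear map `x ↦ conj (C x)`, regarded as a real-linear map. -/
noncomputable def conjMulVec {n : ℕ} (C : Matrix (Fin n) (Fin n) ℂ) :
    EuclideanSpace ℂ (Fin n) →ₗ[ℝ] EuclideanSpace ℂ (Fin n) where
  toFun x := WithLp.toLp 2 (star (C *ᵥ x.ofLp))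
  map_add' x y := by ext i; simp [Matrix.mulVec_add]
  map_smul' r x := by ext i; simp [Matrix.mulVec_smul]

lemma inner_conjMulVec {n : ℕ} (C : Matrix (Fin n) (Fin n) ℂ) (x y : EuclideanSpace ℂ (Fin n)) :
    inner ℂ (conjMulVec C x) y = y.ofLp ⬝ᵥ C *ᵥ x.ofLp := by
  simp [conjMulVec, EuclideanSpace.inner_eq_star_dotProduct]

/-- Autonne–Takagi factorization: every symmetric complex matrix `C` can be
written, via a unitary `U`, as `Uᵀ * C * U` diagonal with real nonnegative entries. -/
theorem autonne_takagi (n : ℕ) (C : Matrix (Fin n) (Fin n) ℂ) (hC : C = Cᵀ) :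
    ∃ U ∈ Matrix.unitaryGroup (Fin n) ℂ, ∃ d : Fin n → ℝ,
      (∀ i, 0 ≤ d i) ∧ Uᵀ * C * U = Matrix.diagonal fun i => (d i : ℂ) := by
  have hT : ∀ x y, inner ℂ (conjMulVec C x) y = inner ℂ (conjMulVec C y) x := by
    intro x y
    rw [inner_conjMulVec, inner_conjMulVec, dotProduct_mulVec, ← mulVec_transpose, ← hC,
      dotProduct_comm]
  obtain ⟨v, hv, d, hd⟩ := exists_orthonormal_eigenvectors (conjMulVec C) hT n (by simp)
  have hinner := orthonormal_iff_ite.1 hv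
  refine ⟨Matrix.of fun i j => v j i, ?_, d, fun i => (hd i).1, ?_⟩
  · rw [Matrix.mem_unitaryGroup_iff']
    ext j k
    rw [Matrix.one_apply, ← hinner j k, EuclideanSpace.inner_eq_star_dotProduct, dotProduct_comm]
    rfl
  · ext j k
    have h : inner ℂ (conjMulVec C (v k)) (v j) = if k = j then (d k : ℂ) else 0 := by
      rw [(hd k).2, ← Complex.coe_smul, inner_smul_left, hinner k j]
      simp
    rw [inner_conjMulVec] at h
    rw [Matrix.mul_assoc, Matrix.diagonal_apply]
    refine Eq.trans h ?_
    by_cases hjk : j = k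
    · simp [hjk]
    · simp [hjk, Ne.symm hjk]
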